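/- Let X_ρ be a ρ-complete modular space whose modular ρ satisfies the Δ₂-condition, and let G be a ‖·‖_ρ-closed subset of X_ρ, where ‖x‖_ρ = inf{t > 0 : ρ(x/t) ≤ t} is the F-norm associated with ρ. If T : G → G satisfies ρ(Tx − Ty) ≤ c·ρ(x − y) for all x, y ∈ G for some c ∈ [0,1), and sup_{n≥1} ρ(2Tⁿx) < ∞ for some x ∈ G, then T has a fixed point. -/

import Mathlib

open Filter Topology ENNReal NNReal

variable {X : Type*} [AddCommGroup X] [Module ℝ X]

/-- A modular on a real vector space `X`. -/
def IsModular (ρ : X → ℝ≥0∞) : Prop :=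
  (∀ x : X, ρ x = 0 ↔ x = 0) ∧ (∀ x : X, ρ (-x) = ρ x) ∧
    (∀ x y : X, ∀ α β : ℝ, 0 ≤ α → 0 ≤ β → α + β = 1 →
      ρ (α • x + β • y) ≤ ρ x + ρ y)

/-- For `s ∈ (0,1]`, an `s`-convex modular on a real vector space `X`. -/
def IsSConvexModular (ρ : X → ℝ≥0∞) (s : ℝ) : Prop :=
  (∀ x : X, ρ x = 0 ↔ x = 0) ∧ (∀ x : X, ρ (-x) = ρ x) ∧
    (∀ x y : X, ∀ a b : ℝ, 0 ≤ a → 0 ≤ b → a ^ s + b ^ s = 1 →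
      ρ (a • x + b • y) ≤ ENNReal.ofReal (a ^ s) * ρ x + ENNReal.ofReal (b ^ s) * ρ y)

/-- The modular space `X_ρ = {x ∈ X : ρ(αx) → 0 as α → 0}`. -/
def modularSpace (ρ : X → ℝ≥0∞) : Set X :=
  {x : X | Tendsto (fun α : ℝ => ρ (α • x)) (𝓝 0) (𝓝 0)}

/-- `ρ`-convergence of a sequence to a point: `ρ(x_n − a) → 0`. -/
def RhoTendsto (ρ : X → ℝ≥0∞) (x : ℕ → X) (a : X) : Prop :=
  Tendsto (fun n => ρ (x n - a)) atTop (𝓝 0)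

/-- A sequence is `ρ`-Cauchy if `ρ(x_m − x_n) → 0` as `m, n → ∞`. -/
def RhoCauchy (ρ : X → ℝ≥0∞) (x : ℕ → X) : Prop :=
  Tendsto (fun p : ℕ × ℕ => ρ (x p.1 - x p.2)) (atTop ×ˢ atTop) (𝓝 0)

/-- `X_ρ` is `ρ`-complete if every `ρ`-Cauchy sequence in `X_ρ`
is `ρ`-convergent to a point of `X_ρ`. -/
def RhoComplete (ρ : X → ℝ≥0∞) : Prop :=
  ∀ x : ℕ → X, (∀ n, x n ∈ modularSpace ρ) → RhoCauchy ρ x →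
    ∃ a ∈ modularSpace ρ, RhoTendsto ρ x a

/-- The Fatou property of a modular. -/
def FatouProperty (ρ : X → ℝ≥0∞) : Prop :=
  ∀ (x y : ℕ → X) (a b : X), RhoTendsto ρ x a → RhoTendsto ρ y b →
    ρ (a - b) ≤ atTop.liminf (fun n => ρ (x n - y n))

/-- The `Δ₂`-type condition with constant `k`: `ρ(2x) ≤ k·ρ(x)` on `X_ρ`. -/
def Delta2Type (ρ : X → ℝ≥0∞) (k : ℝ≥0) : Prop :=
  ∀ x ∈ modularSpace ρ, ρ ((2 : ℝ) • x) ≤ (k : ℝ≥0∞) * ρ x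

/-- The `Δ₂`-condition: for sequences in `X_ρ`, `ρ(x_n) → 0` implies `ρ(2x_n) → 0`. -/
def Delta2Condition (ρ : X → ℝ≥0∞) : Prop :=
  ∀ x : ℕ → X, (∀ n, x n ∈ modularSpace ρ) →
    Tendsto (fun n => ρ (x n)) atTop (𝓝 0) →
      Tendsto (fun n => ρ ((2 : ℝ) • x n)) atTop (𝓝 0)

/-- The `F`-norm associated with a modular: `‖x‖_ρ = inf {t > 0 : ρ(x/t) ≤ t}`. -/
noncomputable def fnorm (ρ : X → ℝ≥0∞) (x : X) : ℝ :=
  sInf {t : ℝ | 0 < t ∧ ρ (t⁻¹ • x) ≤ ENNReal.ofReal t}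
theorem aux_tri {X : Type*} [AddCommGroup X] [Module ℝ X] {ρ : X → ℝ≥0∞} (hmod : IsModular ρ)
    (x y : X) : ρ (x - y) ≤ ρ ((2 : ℝ) • x) + ρ ((2 : ℝ) • y) := by
  have h := hmod.2.2 ((2 : ℝ) • x) (-((2 : ℝ) • y)) (1/2) (1/2) (by norm_num) (by norm_num)
    (by norm_num)
  rw [hmod.2.1] at h
  have e : (1/2 : ℝ) • (2 : ℝ) • x + (1/2 : ℝ) • (-((2 : ℝ) • y)) = x - y := by module
  rwa [e] at h

theorem aux_smul {X : Type*} [AddCommGroup X] [Module ℝ X] {ρ : X → ℝ≥0∞}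
    (r : ℝ) {x : X} (hx : x ∈ modularSpace ρ) : r • x ∈ modularSpace ρ := by
  have h : Tendsto (fun α : ℝ => α * r) (𝓝 0) (𝓝 0) := by
    have : Continuous (fun α : ℝ => α * r) := by fun_prop
    simpa using this.tendsto 0
  have h2 := Tendsto.comp (show Tendsto (fun α : ℝ => ρ (α • x)) (𝓝 0) (𝓝 0) from hx) h
  refine h2.congr (fun α => ?_)
  simp [mul_smul]

theorem aux_sub {X : Type*} [AddCommGroup X] [Module ℝ X] {ρ : X → ℝ≥0∞} (hmod : IsModular ρ)
    {x y : X} (hx : x ∈ modularSpace ρ) (hy : y ∈ modularSpace ρ) :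
    x - y ∈ modularSpace ρ := by
  have h1 : Tendsto (fun α : ℝ => ρ (α • (2 : ℝ) • x)) (𝓝 0) (𝓝 0) := aux_smul 2 hx
  have h2 : Tendsto (fun α : ℝ => ρ (α • (2 : ℝ) • y)) (𝓝 0) (𝓝 0) := aux_smul 2 hy
  have h3 := h1.add h2
  rw [add_zero] at h3
  refine tendsto_of_tendsto_of_tendsto_of_le_of_le tendsto_const_nhds h3 (fun _ => zero_le)
    (fun α => ?_)
  have := aux_tri hmod (α • x) (α • y)
  simpa only [smul_sub, smul_comm α (2 : ℝ)] using this

theorem aux_fnorm {X : Type*} [AddCommGroup X] [Module ℝ X] {ρ : X → ℝ≥0∞}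
    (hΔ : Delta2Condition ρ) (u : ℕ → X) (hu : ∀ n, u n ∈ modularSpace ρ)
    (h : Tendsto (fun n => ρ (u n)) atTop (𝓝 0)) :
    Tendsto (fun n => fnorm ρ (u n)) atTop (𝓝 0) := by
  have hk : ∀ k : ℕ, Tendsto (fun n => ρ (((2 : ℝ) ^ k) • u n)) atTop (𝓝 0) := by
    intro k
    induction k with
    | zero => simpa using h
    | succ k ih =>
      have := hΔ _ (fun n => aux_smul ((2 : ℝ) ^ k) (hu n)) ih
      simpa only [smul_smul, ← pow_succ'] using this
  have hnn : ∀ n, 0 ≤ fnorm ρ (u n) := fun n => Real.sInf_nonneg (fun t ht => ht.1.le)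
  rw [Metric.tendsto_atTop']
  intro ε hε
  obtain ⟨k, hkε⟩ := exists_pow_lt_of_lt_one hε (by norm_num : (1/2 : ℝ) < 1)
  have hp : (0 : ℝ) < (1/2) ^ k := by positivity
  have ev := (hk k).eventually (ge_mem_nhds (ENNReal.ofReal_pos.2 hp))
  obtain ⟨N, hN⟩ := eventually_atTop.1 ev
  refine ⟨N, fun n hn => ?_⟩
  have hle : fnorm ρ (u n) ≤ (1/2) ^ k := by
    refine csInf_le ⟨0, fun t ht => ht.1.le⟩ ⟨hp, ?_⟩
    have e : (((1/2 : ℝ)) ^ k)⁻¹ = 2 ^ k := by simp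
    rw [e]
    exact hN n hn.le
  rw [Real.dist_eq, sub_zero, abs_of_nonneg (hnn n)]
  linarith

/-- (Khamsi) Banach contraction principle on an
`‖·‖_ρ`-closed subset of a complete modular space satisfying the
Δ₂-condition. -/
theorem banach_contraction_modular_fnorm_closed (ρ : X → ℝ≥0∞)
    (hmod : IsModular ρ) (hcomplete : RhoComplete ρ) (hΔ : Delta2Condition ρ)
    (G : Set X) (hGsub : G ⊆ modularSpace ρ)
    (hGclosed : ∀ (x : ℕ → X) (a : X), (∀ n, x n ∈ G) → a ∈ modularSpace ρ →
      Tendsto (fun n => fnorm ρ (x n - a)) atTop (𝓝 0) → a ∈ G)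
    (T : X → X) (hT : ∀ x ∈ G, T x ∈ G)
    (c : ℝ≥0) (hc : c < 1)
    (hcontr : ∀ x ∈ G, ∀ y ∈ G, ρ (T x - T y) ≤ (c : ℝ≥0∞) * ρ (x - y))
    (x : X) (hx : x ∈ G)
    (hsup : (⨆ n ≥ 1, ρ ((2 : ℝ) • T^[n] x)) < ⊤) :
    ∃ z ∈ G, T z = z := by
  have hit : ∀ n, T^[n] x ∈ G := by
    intro n
    induction n with
    | zero => exact hx
    | succ n ih => rw [Function.iterate_succ_apply']; exact hT _ ih
  obtain ⟨M, hM⟩ : ∃ M, M = ⨆ n ≥ 1, ρ ((2 : ℝ) • T^[n] x) := ⟨_, rfl⟩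
  rw [← hM] at hsup
  have hb : ∀ n ≥ 1, ρ ((2 : ℝ) • T^[n] x) ≤ M := by
    intro n hn
    rw [hM]
    exact le_iSup₂ (f := fun n (_ : n ≥ 1) => ρ ((2 : ℝ) • T^[n] x)) n hn
  have hd : ∀ k m n, 1 ≤ m → 1 ≤ n →
      ρ (T^[m + k] x - T^[n + k] x) ≤ (c : ℝ≥0∞) ^ k * (M + M) := by
    intro k m n hm hn
    induction k with
    | zero =>
      simpa using (aux_tri hmod _ _).trans (add_le_add (hb m hm) (hb n hn))
    | succ k ih =>
      rw [← add_assoc, ← add_assoc, Function.iterate_succ_apply', Function.iterate_succ_apply']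
      refine (hcontr _ (hit _) _ (hit _)).trans ?_
      rw [pow_succ', mul_assoc]
      gcongr
  have hlim : Tendsto (fun k : ℕ => (c : ℝ≥0∞) ^ k * (M + M)) atTop (𝓝 0) := by
    have h1 : Tendsto (fun k : ℕ => (c : ℝ≥0∞) ^ k) atTop (𝓝 0) :=
      ENNReal.tendsto_pow_atTop_nhds_zero_of_lt_one (by exact_mod_cast hc)
    have := ENNReal.Tendsto.mul_const (b := M + M) h1
      (Or.inr (ENNReal.add_lt_top.2 ⟨hsup, hsup⟩).ne)
    simpa using this
  have hmem : ∀ n, T^[n] x ∈ modularSpace ρ := fun n => hGsub (hit n)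
  have hC : RhoCauchy ρ (fun n => T^[n] x) := by
    unfold RhoCauchy
    rw [ENNReal.tendsto_nhds_zero]
    intro ε hε
    obtain ⟨k, hk⟩ := ((ENNReal.tendsto_nhds_zero.1 hlim) ε hε).exists
    have h1 := eventually_ge_atTop (k + 1)
    filter_upwards [h1.prod_mk h1] with p hp
    have := hd k (p.1 - k) (p.2 - k) (by omega) (by omega)
    rw [Nat.sub_add_cancel (by omega), Nat.sub_add_cancel (by omega)] at this
    exact this.trans hk
  obtain ⟨a, ha, hlima⟩ := hcomplete _ hmem hC
  have hlima' : Tendsto (fun n => ρ (T^[n] x - a)) atTop (𝓝 0) := hlima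
  have haG : a ∈ G := hGclosed (fun n => T^[n] x) a hit ha
    (aux_fnorm hΔ _ (fun n => aux_sub hmod (hmem n) ha) hlima')
  refine ⟨a, haG, ?_⟩
  have key : ∀ n, ρ ((1/2 : ℝ) • (T a - a)) ≤ ρ (T^[n] x - a) + ρ (T^[n+1] x - a) := by
    intro n
    have h := hmod.2.2 (-(T (T^[n] x) - T a)) (T^[n+1] x - a) (1/2) (1/2)
      (by norm_num) (by norm_num) (by norm_num)
    rw [hmod.2.1, Function.iterate_succ_apply'] at h
    have e : (1/2 : ℝ) • (-(T (T^[n] x) - T a)) + (1/2 : ℝ) • (T (T^[n] x) - a)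
        = (1/2 : ℝ) • (T a - a) := by module
    rw [e] at h
    rw [Function.iterate_succ_apply']
    refine h.trans (add_le_add ((hcontr _ (hit n) _ haG).trans ?_) le_rfl)
    exact mul_le_of_le_one_left zero_le (by exact_mod_cast hc.le)
  have hs := hlima'.add (hlima'.comp (tendsto_add_atTop_nat 1))
  rw [add_zero] at hs
  have h0 : ρ ((1/2 : ℝ) • (T a - a)) ≤ 0 := ge_of_tendsto' hs key
  have h00 := (hmod.1 _).1 (le_antisymm h0 zero_le)
  rcases smul_eq_zero.1 h00 with h | h
  · norm_num at h
  · exact sub_eq_zero.1 h
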